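/- For all natural numbers a, b, c, m with m ≤ b ≤ a, one has C(a−m, c) · C(b, c) ≥ C(a, c) · C(b−m, c), where C(·,·) denotes a binomial coefficient. -/

import Mathlib

/-!
Multiplying by `(c !) ^ 2` turns the binomial coefficients into falling factorials, and there the
inequality holds factor by factor (`descFactorial_mul_descFactorial_le`).
-/

/-- Falling-factorial form of the inequality, which holds factor by factor:
`(a - i) * (b - m - i) ≤ (a - m - i) * (b - i)`, because the difference of the two sides is
`m * (a - b)` when `i ≤ b - m`, and the left side vanishes otherwise. -/
lemma descFactorial_mul_descFactorial_le (a b c m : ℕ) (h1 : m ≤ b) (h2 : b ≤ a) :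
    Nat.descFactorial a c * Nat.descFactorial (b - m) c
      ≤ Nat.descFactorial (a - m) c * Nat.descFactorial b c := by
  induction c with
  | zero => simp
  | succ i ih =>
    have key : (a - i) * (b - m - i) ≤ (a - m - i) * (b - i) := by
      rcases le_total (b - m) i with h | h
      · simp [Nat.sub_eq_zero_of_le h]
      · obtain ⟨d, rfl⟩ := Nat.exists_eq_add_of_le h2
        obtain ⟨k, rfl⟩ := Nat.exists_eq_add_of_le h1
        obtain ⟨e, rfl⟩ := Nat.exists_eq_add_of_le (show i ≤ k by omega)
        rw [show m + (i + e) + d - i = m + e + d by omega,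
          show m + (i + e) - m - i = e by omega,
          show m + (i + e) + d - m - i = e + d by omega,
          show m + (i + e) - i = m + e by omega]
        nlinarith [Nat.zero_le (m * d)]
    simp only [Nat.descFactorial_succ]
    calc _ = ((a - i) * (b - m - i)) * (a.descFactorial i * (b - m).descFactorial i) := by ring
      _ ≤ ((a - m - i) * (b - i)) * ((a - m).descFactorial i * b.descFactorial i) :=
        Nat.mul_le_mul key ih
      _ = _ := by ring

/-- For all natural numbers `a, b, c, m` with `m ≤ b ≤ a`:
`C(a-m, c) ⋅ C(b, c) ≥ C(a, c) ⋅ C(b-m, c)`. -/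
theorem choose_mul_choose_le (a b c m : ℕ) (h1 : m ≤ b) (h2 : b ≤ a) :
    Nat.choose a c * Nat.choose (b - m) c ≤ Nat.choose (a - m) c * Nat.choose b c := by
  have h := descFactorial_mul_descFactorial_le a b c m h1 h2
  simp only [Nat.descFactorial_eq_factorial_mul_choose] at h
  -- Both sides of `h` carry the positive factor `(c !) ^ 2`.
  have hc : 0 < c.factorial * c.factorial := Nat.mul_pos c.factorial_pos c.factorial_pos
  refine Nat.le_of_mul_le_mul_left ?_ hc
  linarith
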